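/- Let L be a bounded lattice and → a preconditional on L. Let P = {(x, x→y) : x, y ∈ L}, with (a,b) ◁ (c,d) iff c ≰ b. Then the map f(a) = {(x, x→y) ∈ P : x ≤ a} is a complete embedding of (L,→) into (𝔏(P,◁), ↠_◁), which is an isomorphism if L is complete. -/

import Mathlib

/-- The closure operation `c_◁` on subsets of a relational frame `(X, ◁)`. -/
def cl {X : Type*} (lt : X → X → Prop) (A : Set X) : Set X :=
  {x | ∀ x', lt x' x → ∃ x'', lt x' x'' ∧ x'' ∈ A}

/-- The conditional operation `A ↠_◁ B` on subsets of a relational frame `(X, ◁)`. -/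
def condSet {X : Type*} (lt : X → X → Prop) (A B : Set X) : Set X :=
  {x | ∀ y, lt y x → y ∈ A → ∃ z, lt y z ∧ z ∈ A ∩ B}

/-- `→` is a preconditional on the bounded lattice `L`. -/
def Preconditional {L : Type*} [Lattice L] [BoundedOrder L] (imp : L → L → L) : Prop :=
  (∀ a : L, imp ⊤ a ≤ a) ∧
  (∀ a b : L, a ⊓ b ≤ imp a b) ∧
  (∀ a b : L, imp a b ≤ imp a (a ⊓ b)) ∧
  (∀ a b c : L, b ≤ a → imp a (imp b c) ≤ imp b c) ∧
  (∀ a b c : L, b ≤ c → imp a b ≤ imp a c)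

/-- The relation `◁` on a set `P` of pairs of lattice elements: `(a,b) ◁ (c,d)` iff `c ≰ b`. -/
def ltP {L : Type*} [Lattice L] (P : Set (L × L)) : ↥P → ↥P → Prop :=
  fun p q => ¬ (q.1.1 ≤ p.1.2)

/-- The map `f(a) = {(x,y) ∈ P : x ≤ a}`. -/
def emb {L : Type*} [Lattice L] (P : Set (L × L)) (a : L) : Set ↥P :=
  {p | p.1.1 ≤ a}

/-- The set of pairs `P = {(x, x→y) : x, y ∈ L}`. -/
def Pcond {L : Type*} [Lattice L] [BoundedOrder L] (imp : L → L → L) : Set (L × L) :=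
  {p | ∃ x y : L, p = (x, imp x y)}

/-!
The second coordinates of pairs in `P` exhaust `L`, because `⊤ → b = b`; hence a pair `p` lies in
`c_◁(A)` exactly when `p.1` is below every upper bound of the first coordinates of `A`. When these
have a join `a`, this says `c_◁(A) = f(a)`. As the first coordinates also exhaust `L`, the map `f`
behaves like the embedding of `L` into its MacNeille completion.

For the implication, `p ∈ f(a) ↠_◁ f(b)` says that every `(u, w) ∈ P` with `u ≤ a` and `a ⊓ b ≤ w`
has `p.1 ≤ w`. The least such `w` is `a → b`: it is one of them, and if `u ≤ a` and `a ⊓ b ≤ u → v`,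
then `a → b ≤ a → (a ⊓ b) ≤ a → (u → v) ≤ u → v`.
-/

section Density

variable {α : Type*} [Preorder α]

/-- `S` is join-dense: every element is the join of the members of `S` below it.
For the first coordinates of `P`, this is what makes `f` an order embedding. -/
def JoinDense (S : Set α) : Prop :=
  ∀ a, IsLUB (S ∩ Set.Iic a) a

/-- `S` is meet-dense: every element is the meet of the members of `S` above it.
For the second coordinates of `P`, this is what ties `c_◁` to the upper bounds of `L`. -/
def MeetDense (S : Set α) : Prop :=
  ∀ a, IsGLB (S ∩ Set.Ici a) a

theorem JoinDense.le_of_forall {S : Set α} (hS : JoinDense S) {a b : α}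
    (h : ∀ s ∈ S, s ≤ a → s ≤ b) : a ≤ b :=
  (hS a).2 fun s hs => h s hs.1 hs.2

theorem MeetDense.le_of_forall {S : Set α} (hS : MeetDense S) {a b : α}
    (h : ∀ s ∈ S, b ≤ s → a ≤ s) : a ≤ b :=
  (hS b).2 fun s hs => h s hs.1 hs.2

theorem joinDense_univ : JoinDense (Set.univ : Set α) := fun a => by
  rw [Set.univ_inter]
  exact isLUB_Iic

theorem meetDense_univ : MeetDense (Set.univ : Set α) := fun a => by
  rw [Set.univ_inter]
  exact isGLB_Ici

end Density

theorem subset_cl {X : Type*} (lt : X → X → Prop) (A : Set X) : A ⊆ cl lt A :=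
  fun x hx _ hlt => ⟨x, hlt, hx⟩

section Pairs

variable {L : Type*} [Lattice L] {P : Set (L × L)}

theorem mem_cl_ltP_iff (hsnd : MeetDense (Prod.snd '' P)) {A : Set P} {p : P} :
    p ∈ cl (ltP P) A ↔ p.1.1 ∈ lowerBounds (upperBounds ((fun q : P => q.1.1) '' A)) := by
  constructor
  · intro hp b hb
    refine hsnd.le_of_forall ?_
    rintro _ ⟨r, hr, rfl⟩ hbr
    by_contra hpr
    obtain ⟨q, hqr, hqA⟩ := hp ⟨r, hr⟩ hpr
    exact hqr ((hb ⟨q, hqA, rfl⟩).trans hbr)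
  · intro hp r hpr
    by_contra! hA
    have hr : r.1.2 ∈ upperBounds ((fun q : P => q.1.1) '' A) := by
      rintro _ ⟨q, hqA, rfl⟩
      by_contra hqr
      exact hA q hqr hqA
    exact hpr (hp hr)

theorem cl_ltP_eq_emb (hsnd : MeetDense (Prod.snd '' P)) {A : Set P} {a : L}
    (ha : IsLUB ((fun q : P => q.1.1) '' A) a) : cl (ltP P) A = emb P a := by
  ext p
  rw [mem_cl_ltP_iff hsnd, ha.upperBounds_eq, lowerBounds_Ici]
  rfl

theorem cl_ltP_emb (hsnd : MeetDense (Prod.snd '' P)) (a : L) :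
    cl (ltP P) (emb P a) = emb P a := by
  refine Set.Subset.antisymm (fun p hp => ?_) (subset_cl _ _)
  exact (mem_cl_ltP_iff hsnd).1 hp (Set.forall_mem_image.2 fun _ hq => hq)

theorem emb_subset_emb_iff (hfst : JoinDense (Prod.fst '' P)) {a b : L} :
    emb P a ⊆ emb P b ↔ a ≤ b := by
  refine ⟨fun h => hfst.le_of_forall ?_, fun hab p hp => le_trans hp hab⟩
  rintro _ ⟨p, hp, rfl⟩ hpa
  exact h (a := ⟨p, hp⟩) hpa

theorem emb_injective (hfst : JoinDense (Prod.fst '' P)) : Function.Injective (emb P) :=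
  fun _ _ h => le_antisymm ((emb_subset_emb_iff hfst).1 h.subset)
    ((emb_subset_emb_iff hfst).1 h.superset)

theorem emb_eq_biInter_of_isGLB {S : Set L} {a : L} (ha : IsGLB S a) :
    emb P a = ⋂ s ∈ S, emb P s := by
  ext p
  simp only [Set.mem_iInter]
  exact le_isGLB_iff ha

theorem upperBounds_image_fst_biUnion_emb (hfst : JoinDense (Prod.fst '' P)) (S : Set L) :
    upperBounds ((fun q : P => q.1.1) '' ⋃ s ∈ S, emb P s) = upperBounds S := by
  ext b
  calc b ∈ upperBounds ((fun q : P => q.1.1) '' ⋃ s ∈ S, emb P s)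
      ↔ ⋃ s ∈ S, emb P s ⊆ emb P b := Set.forall_mem_image
    _ ↔ ∀ s ∈ S, emb P s ⊆ emb P b := Set.iUnion₂_subset_iff
    _ ↔ b ∈ upperBounds S := forall₂_congr fun _ _ => emb_subset_emb_iff hfst

theorem emb_eq_cl_biUnion_of_isLUB (hfst : JoinDense (Prod.fst '' P))
    (hsnd : MeetDense (Prod.snd '' P)) {S : Set L} {a : L} (ha : IsLUB S a) :
    emb P a = cl (ltP P) (⋃ s ∈ S, emb P s) := by
  refine (cl_ltP_eq_emb hsnd ?_).symm
  exact (isLUB_congr (upperBounds_image_fst_biUnion_emb hfst S)).2 ha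

theorem mem_condSet_emb_iff (hfst : JoinDense (Prod.fst '' P)) {a b : L} {p : P} :
    p ∈ condSet (ltP P) (emb P a) (emb P b) ↔
      ∀ r ∈ P, r.1 ≤ a → a ⊓ b ≤ r.2 → p.1.1 ≤ r.2 := by
  constructor
  · intro hp r hr hra hrab
    by_contra hpr
    obtain ⟨z, hz, hza, hzb⟩ := hp ⟨r, hr⟩ hpr hra
    exact hz ((le_inf hza hzb).trans hrab)
  · intro hp r hpr hra
    by_contra! hz
    refine hpr (hp r.1 r.2 hra (hfst.le_of_forall ?_))
    rintro _ ⟨z, hzP, rfl⟩ hzab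
    by_contra hzr
    exact hz ⟨z, hzP⟩ hzr ⟨hzab.trans inf_le_left, hzab.trans inf_le_right⟩

end Pairs

section Pcond

variable {L : Type*} [Lattice L] [BoundedOrder L] {imp : L → L → L}

theorem fst_image_Pcond (imp : L → L → L) : Prod.fst '' Pcond imp = Set.univ :=
  Set.eq_univ_of_forall fun a => ⟨(a, imp a a), ⟨a, a, rfl⟩, rfl⟩

theorem joinDense_fst_image_Pcond (imp : L → L → L) : JoinDense (Prod.fst '' Pcond imp) :=
  fst_image_Pcond imp ▸ joinDense_univ

namespace Preconditional

theorem inf_le_imp (himp : Preconditional imp) (a b : L) : a ⊓ b ≤ imp a b :=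
  himp.2.1 a b

theorem top_imp (himp : Preconditional imp) (a : L) : imp ⊤ a = a :=
  le_antisymm (himp.1 a) (by simpa only [top_inf_eq] using himp.inf_le_imp ⊤ a)

theorem snd_image_Pcond (himp : Preconditional imp) : Prod.snd '' Pcond imp = Set.univ :=
  Set.eq_univ_of_forall fun a => ⟨(⊤, imp ⊤ a), ⟨⊤, a, rfl⟩, himp.top_imp a⟩

theorem meetDense_snd_image_Pcond (himp : Preconditional imp) :
    MeetDense (Prod.snd '' Pcond imp) :=
  himp.snd_image_Pcond ▸ meetDense_univ

theorem imp_le_imp_of_inf_le (himp : Preconditional imp) {a b u v : L} (hua : u ≤ a)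
    (h : a ⊓ b ≤ imp u v) : imp a b ≤ imp u v := by
  obtain ⟨-, -, imp_le_imp_inf, imp_imp_le, imp_mono_right⟩ := himp
  calc imp a b ≤ imp a (a ⊓ b) := imp_le_imp_inf a b
    _ ≤ imp a (imp u v) := imp_mono_right a _ _ h
    _ ≤ imp u v := imp_imp_le a u v hua

theorem emb_imp (himp : Preconditional imp) (a b : L) :
    emb (Pcond imp) (imp a b) =
      condSet (ltP (Pcond imp)) (emb (Pcond imp) a) (emb (Pcond imp) b) := by
  ext p
  rw [mem_condSet_emb_iff (joinDense_fst_image_Pcond imp)]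
  constructor
  · rintro hp _ ⟨u, v, rfl⟩ hua hab
    exact le_trans hp (himp.imp_le_imp_of_inf_le hua hab)
  · intro hp
    exact hp (a, imp a b) ⟨a, b, rfl⟩ le_rfl (himp.inf_le_imp a b)

end Preconditional

end Pcond

/-- Representation of a bounded lattice with a preconditional `→`: the map
`f(a) = {(x, x→y) ∈ P : x ≤ a}` is a complete embedding of `(L,→)` into
`(𝔏(P,◁), ↠_◁)` (injective, lands in fixpoints, preserves all existing meets and joins,
and sends `a → b` to `f(a) ↠_◁ f(b)`), which is an isomorphism (surjective onto the
fixpoints) if `L` is complete. -/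
theorem stmt_17 {L : Type*} [Lattice L] [BoundedOrder L] (imp : L → L → L)
    (himp : Preconditional imp) :
    Function.Injective (emb (Pcond imp)) ∧
    (∀ a : L, cl (ltP (Pcond imp)) (emb (Pcond imp) a) = emb (Pcond imp) a) ∧
    (∀ (S : Set L) (a : L), IsGLB S a → emb (Pcond imp) a = ⋂ s ∈ S, emb (Pcond imp) s) ∧
    (∀ (S : Set L) (a : L), IsLUB S a →
      emb (Pcond imp) a = cl (ltP (Pcond imp)) (⋃ s ∈ S, emb (Pcond imp) s)) ∧
    (∀ a b : L, emb (Pcond imp) (imp a b) =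
      condSet (ltP (Pcond imp)) (emb (Pcond imp) a) (emb (Pcond imp) b)) ∧
    ((∀ S : Set L, ∃ a : L, IsLUB S a) →
      ∀ A : Set ↥(Pcond imp), cl (ltP (Pcond imp)) A = A →
        ∃ a : L, emb (Pcond imp) a = A) := by
  have hfst := joinDense_fst_image_Pcond imp
  have hsnd := himp.meetDense_snd_image_Pcond
  refine ⟨emb_injective hfst, cl_ltP_emb hsnd, fun S a ha => emb_eq_biInter_of_isGLB ha,
    fun S a ha => emb_eq_cl_biUnion_of_isLUB hfst hsnd ha, himp.emb_imp, fun hL A hA => ?_⟩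
  obtain ⟨a, ha⟩ := hL ((fun q : Pcond imp => q.1.1) '' A)
  exact ⟨a, (cl_ltP_eq_emb hsnd ha).symm.trans hA⟩
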